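/- Let f be an orientation-preserving homeomorphism of ℝ² satisfying (P1) and (P2), with Fix(f) not compact, and let I be an adapted isotopy. Let M be a bound with |Enlace_I(z, z')| ≤ M for all distinct z, z' ∈ Fix(f), let z' ∈ Fix(f), and let U be a free disc for f. Then the image of the function z ↦ α_{U,z'}(z)/τ_U(z), defined on Rec⁺(f) ∩ U, is contained in an interval of length 2M + 4. -/

import Mathlib

open MeasureTheory Filter Topology Set Metric

noncomputable section

attribute [local instance] Classical.propDecidable

/-- An isotopy (within homeomorphisms of `X`) from the identity to `f`,
parametrised by `t ∈ [0,1]` (the values for `t ∉ [0,1]` are irrelevant). -/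
structure HIsotopy {X : Type*} [TopologicalSpace X] (f : X ≃ₜ X) where
  F : ℝ → X ≃ₜ X
  cont : Continuous fun p : ℝ × X => F p.1 p.2
  cont_symm : Continuous fun p : ℝ × X => (F p.1).symm p.2
  zero : F 0 = Homeomorph.refl X
  one : F 1 = f

/-- The set of fixed points of a map. -/
def FixPts {X : Type*} (g : X → X) : Set X := {z | g z = z}

/-- The set of positively recurrent points of `f`. -/
def RecPlus (f : ℂ ≃ₜ ℂ) : Set ℂ :=
  {z | ∃ n : ℕ → ℕ, StrictMono n ∧ Tendsto (fun k => (⇑f)^[n k] z) atTop (𝓝 z)}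

/-- The total angular variation (number of turns around the origin, i.e. the
integral of the polar-angle form `dθ`) of a continuous path `[0,1] → ℂ ∖ {0}`,
defined via a continuous lift of the argument (junk value otherwise). -/
def angVar (γ : ℝ → ℂ) : ℝ :=
  if h : ∃ θ : ℝ → ℝ, ContinuousOn θ (Set.Icc 0 1) ∧
      ∀ t ∈ Set.Icc (0 : ℝ) 1, γ t = (‖γ t‖ : ℂ) * Complex.exp ((θ t : ℂ) * Complex.I)
  then (h.choose 1 - h.choose 0) / (2 * Real.pi)
  else 0

/-- `Enlace_I(z,z')`: the integral of `dθ` along `t ↦ f_t(z) - f_t(z')`. -/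
def Enlace {f : ℂ ≃ₜ ℂ} (I : HIsotopy f) (z z' : ℂ) : ℝ :=
  angVar fun t => I.F t z - I.F t z'

/-- `Tourne_I(z)`: the integral of `dθ` along `t ↦ f_t(z)`. -/
def Tourne {f : ℂ ≃ₜ ℂ} (I : HIsotopy f) (z : ℂ) : ℝ :=
  angVar fun t => I.F t z

/-- Property (P1): `Enlace_I` is bounded on pairs of distinct fixed points. -/
def P1 {f : ℂ ≃ₜ ℂ} (I : HIsotopy f) : Prop :=
  ∃ M : ℝ, ∀ z ∈ FixPts ⇑f, ∀ z' ∈ FixPts ⇑f, z ≠ z' → |Enlace I z z'| ≤ M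

/-- Property (P2): `Tourne_I` is constant on the fixed points in a
neighbourhood of infinity (i.e. outside some compact set). -/
def P2 {f : ℂ ≃ₜ ℂ} (I : HIsotopy f) : Prop :=
  ∃ K : Set ℂ, IsCompact K ∧
    ∀ z ∈ FixPts ⇑f \ K, ∀ z' ∈ FixPts ⇑f \ K, Tourne I z = Tourne I z'

/-- An isotopy is adapted if `Tourne_I` vanishes on the fixed points in a
neighbourhood of infinity. -/
def Adapted {f : ℂ ≃ₜ ℂ} (I : HIsotopy f) : Prop :=
  ∃ K : Set ℂ, IsCompact K ∧ ∀ z ∈ FixPts ⇑f \ K, Tourne I z = 0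

/-- The orbit of `z` has rotation number `ρ` around `z'` (with respect to the
isotopy `I`): along every strictly increasing sequence of integers `(n k)` with
`f^[n k] z → z`, the Birkhoff averages of `Enlace I · z'` converge to `ρ`. -/
def HasRot {f : ℂ ≃ₜ ℂ} (I : HIsotopy f) (z' z : ℂ) (ρ : ℝ) : Prop :=
  ∀ n : ℕ → ℕ, StrictMono n → Tendsto (fun k => (⇑f)^[n k] z) atTop (𝓝 z) →
    Tendsto (fun k => (∑ r ∈ Finset.range (n k), Enlace I ((⇑f)^[r] z) z') / (n k : ℝ))
      atTop (𝓝 ρ)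

/-- The rotation number `ρ_{z'}(z)` as a function (junk value `0` if it is
not defined). -/
def rho {f : ℂ ≃ₜ ℂ} (I : HIsotopy f) (z' z : ℂ) : ℝ :=
  if h : ∃ ρ : ℝ, HasRot I z' z ρ then h.choose else 0

/-- A free disc for `f`: an open set homeomorphic to the plane and disjoint
from its image. -/
def FreeDisc (f : ℂ ≃ₜ ℂ) (U : Set ℂ) : Prop :=
  IsOpen U ∧ Nonempty (U ≃ₜ ℂ) ∧ Disjoint (⇑f '' U) U

/-- The first return time `τ_U(z)` to `U` (junk value `0` if the orbit never
returns). -/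
def retTime (f : ℂ ≃ₜ ℂ) (U : Set ℂ) (z : ℂ) : ℕ :=
  sInf {n : ℕ | 0 < n ∧ (⇑f)^[n] z ∈ U}

/-- `γ` is a path in `U` from `x` to `y` (parametrised by `[0,1]`). -/
def IsPathIn (U : Set ℂ) (x y : ℂ) (γ : ℝ → ℂ) : Prop :=
  ContinuousOn γ (Set.Icc 0 1) ∧ (∀ t ∈ Set.Icc (0 : ℝ) 1, γ t ∈ U) ∧ γ 0 = x ∧ γ 1 = y

/-- `α_{U,z'}(z) = Σ_{0 ≤ ℓ < τ_U(z)} Enlace_I(f^ℓ(z),z') + ∫_{γ_{U,z} - z'} dθ`,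
where `γ_{U,z}` is a path in `U` joining the first return `F_U(z)` to `z`. -/
def alphaU {f : ℂ ≃ₜ ℂ} (I : HIsotopy f) (U : Set ℂ) (z' z : ℂ) : ℝ :=
  (∑ ℓ ∈ Finset.range (retTime f U z), Enlace I ((⇑f)^[ℓ] z) z') +
    if h : ∃ γ : ℝ → ℂ, IsPathIn U ((⇑f)^[retTime f U z] z) z γ
    then angVar fun t => h.choose t - z' else 0

/-- `α̂_{U,R}(z) = sup { |α_{U,z'}(z)| : z' ∈ Fix(f), ‖z'‖ ≥ R }`. -/
def alphaHat {f : ℂ ≃ₜ ℂ} (I : HIsotopy f) (U : Set ℂ) (R : ℝ) (z : ℂ) : ℝ :=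
  sSup {a : ℝ | ∃ z' ∈ FixPts ⇑f, R ≤ ‖z'‖ ∧ a = |alphaU I U z' z|}

/-- The (closed) support of a measure. -/
def measSupport {X : Type*} [TopologicalSpace X] {m : MeasurableSpace X}
    (μ : Measure X) : Set X :=
  {x | ∀ U : Set X, IsOpen U → x ∈ U → μ U ≠ 0}

/-- The standard unit sphere `S² ⊂ ℝ³`. -/
notation "𝕊²" => Metric.sphere (0 : EuclideanSpace ℝ (Fin 3)) 1

instance : Fact (Module.finrank ℝ (EuclideanSpace ℝ (Fin 3)) = 3) :=
  ⟨finrank_euclideanSpace_fin⟩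

open Manifold in
/-- `g` is a `C¹` diffeomorphism of the standard sphere. -/
def IsC1SphereDiffeo (g : 𝕊² → 𝕊²) : Prop :=
  Function.Bijective g ∧ ContMDiff (𝓡 2) (𝓡 2) 1 g ∧
    ∃ g' : 𝕊² → 𝕊², Function.LeftInverse g' g ∧ Function.RightInverse g' g ∧
      ContMDiff (𝓡 2) (𝓡 2) 1 g'

/-- `f` extends to a `C¹` diffeomorphism of `S² = ℝ² ⊔ {∞}` for some smooth
structure on `S²`: transporting the extension of `f` to the one-point
compactification through some homeomorphism with the standard sphere yields a
`C¹` diffeomorphism. -/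
def ExtendsToC1SphereDiffeo (f : ℂ ≃ₜ ℂ) : Prop :=
  ∃ φ : OnePoint ℂ ≃ₜ 𝕊², IsC1SphereDiffeo fun x => φ (OnePoint.map (⇑f) (φ.symm x))

/-- The commutator loop `t ↦ [f₁^t, f₂^t] = f₁^t ∘ f₂^t ∘ (f₁^t)⁻¹ ∘ (f₂^t)⁻¹`. -/
def commLoop {X : Type*} [TopologicalSpace X] {f₁ f₂ : X ≃ₜ X}
    (I₁ : HIsotopy f₁) (I₂ : HIsotopy f₂) (t : ℝ) : X ≃ₜ X :=
  (I₂.F t).symm.trans ((I₁.F t).symm.trans ((I₂.F t).trans (I₁.F t)))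

/-- The invariant `W(f₁,f₂)` vanishes: for isotopies from the identity to
`f₁`, `f₂`, the commutator loop is null-homotopic (rel basepoint) in the group
of homeomorphisms. -/
def WVanishes {X : Type*} [TopologicalSpace X] (f₁ f₂ : X ≃ₜ X) : Prop :=
  ∃ (I₁ : HIsotopy f₁) (I₂ : HIsotopy f₂) (H : ℝ → ℝ → X ≃ₜ X),
    Continuous (fun p : (ℝ × ℝ) × X => H p.1.1 p.1.2 p.2) ∧
    Continuous (fun p : (ℝ × ℝ) × X => (H p.1.1 p.1.2).symm p.2) ∧
    (∀ t, H 0 t = commLoop I₁ I₂ t) ∧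
    (∀ t, H 1 t = Homeomorph.refl X) ∧
    (∀ s, H s 0 = Homeomorph.refl X) ∧
    (∀ s, H s 1 = Homeomorph.refl X)

/-- The shorter great-circle arc joining `p` to `z` on the unit sphere
(for `z` neither `p` nor its antipode): the points of the sphere which are
nonnegative linear combinations of `p` and `z`. -/
def minorArcS (p z : 𝕊²) : Set 𝕊² :=
  {x | ∃ a b : ℝ, 0 ≤ a ∧ 0 ≤ b ∧
    (x : EuclideanSpace ℝ (Fin 3)) =
      a • (p : EuclideanSpace ℝ (Fin 3)) + b • (z : EuclideanSpace ℝ (Fin 3))}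

/-- The longer great-circle arc joining `p` to `z` on the unit sphere. -/
def majorArcS (p z : 𝕊²) : Set 𝕊² :=
  {x | ∃ a b : ℝ, (a ≤ 0 ∨ b ≤ 0) ∧
    (x : EuclideanSpace ℝ (Fin 3)) =
      a • (p : EuclideanSpace ℝ (Fin 3)) + b • (z : EuclideanSpace ℝ (Fin 3))}


/-! ### Lifting through the exponential -/

lemma homotopy_log {A : Type*} [TopologicalSpace A] (K : unitInterval × A → ℂ)
    (hK : Continuous K) (hK0 : ∀ p, K p ≠ 0) (f : A → ℂ) (hf : Continuous f)
    (h0 : ∀ a, K (0, a) = Complex.exp (f a)) :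
    ∃ L : unitInterval × A → ℂ, Continuous L ∧ (∀ p, Complex.exp (L p) = K p) ∧
      ∀ a, L (0, a) = f a := by
  let H : C(unitInterval × A, {z : ℂ // z ≠ 0}) :=
    ⟨fun p => ⟨K p, hK0 p⟩, by fun_prop⟩
  have cov := Complex.isCoveringMap_exp
  have H0 : ∀ a, H (0, a) = (fun z : ℂ ↦ (⟨_, z.exp_ne_zero⟩ : {z : ℂ // z ≠ 0}))
      ((⟨f, hf⟩ : C(A, ℂ)) a) := fun a => Subtype.ext (h0 a)
  refine ⟨cov.liftHomotopy H ⟨f, hf⟩ H0, (cov.liftHomotopy H ⟨f, hf⟩ H0).continuous, ?_, ?_⟩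
  · intro p
    exact congrArg Subtype.val (congrFun (cov.liftHomotopy_lifts H ⟨f, hf⟩ H0) p)
  · intro a
    exact cov.liftHomotopy_zero H ⟨f, hf⟩ H0 a

lemma log_unique {A : Type*} [TopologicalSpace A] [PreconnectedSpace A] (L₁ L₂ : A → ℂ)
    (h₁ : Continuous L₁) (h₂ : Continuous L₂)
    (h : ∀ a, Complex.exp (L₁ a) = Complex.exp (L₂ a)) (a : A) (ha : L₁ a = L₂ a) :
    L₁ = L₂ := by
  refine Complex.isCoveringMap_exp.eq_of_comp_eq h₁ h₂ ?_ a ha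
  funext x
  exact Subtype.ext (h x)

lemma log_diff_const {A : Type*} [TopologicalSpace A] [PreconnectedSpace A] (L₁ L₂ : A → ℂ)
    (h₁ : Continuous L₁) (h₂ : Continuous L₂)
    (h : ∀ a, Complex.exp (L₁ a) = Complex.exp (L₂ a)) (a b : A) :
    L₁ b - L₂ b = L₁ a - L₂ a := by
  have := log_unique L₁ (fun x => L₂ x + (L₁ a - L₂ a)) h₁ (by fun_prop) (by
    intro x
    rw [Complex.exp_add, Complex.exp_sub, h a, div_self (Complex.exp_ne_zero _), mul_one, h x])
    a (by ring)
  have := congrFun this b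
  rw [this]; ring

lemma exists_log (g : ℂ → ℂ) (hg : Continuous g) (h0 : ∀ x, g x ≠ 0) :
    ∃ v : ℂ → ℂ, Continuous v ∧ ∀ x, Complex.exp (v x) = g x := by
  obtain ⟨L, hL, hexp, -⟩ := homotopy_log (fun p : unitInterval × ℂ => g ((p.1 : ℝ) * p.2))
    (by fun_prop) (fun p => h0 _) (fun _ => Complex.log (g 0)) continuous_const
    (by intro a; simp [Complex.exp_log (h0 0)])
  exact ⟨fun x => L (1, x), by fun_prop, fun x => by simp [hexp]⟩

/-! ### Homeomorphisms with a continuous angle function -/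

/-- `h` admits a continuous symmetric determination of `log ((h x - h y) / (x - y))`. -/
def HasE (h : ℂ ≃ₜ ℂ) : Prop :=
  ∃ E : ℂ × ℂ → ℂ, ContinuousOn E {p | p.1 ≠ p.2} ∧
    (∀ x y, x ≠ y → h x - h y = (x - y) * Complex.exp (E (x, y))) ∧
    ∀ x y, x ≠ y → E (x, y) = E (y, x)

lemma HasE.refl : HasE (Homeomorph.refl ℂ) :=
  ⟨fun _ => 0, continuousOn_const, by simp, by simp⟩

lemma HasE.translate (c : ℂ) : HasE (Homeomorph.addRight c) :=
  ⟨fun _ => 0, continuousOn_const, by simp, by simp⟩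

lemma HasE.trans {g h : ℂ ≃ₜ ℂ} (hg : HasE g) (hh : HasE h) : HasE (g.trans h) := by
  obtain ⟨E, hE, hE1, hE2⟩ := hg
  obtain ⟨D, hD, hD1, hD2⟩ := hh
  refine ⟨fun p => E p + D (g p.1, g p.2), ?_, ?_, ?_⟩
  · refine hE.add (hD.comp (by fun_prop) ?_)
    intro p hp
    exact fun h => hp (g.injective h)
  · intro x y hxy
    have : g x ≠ g y := fun h => hxy (g.injective h)
    simp only [Homeomorph.trans_apply]
    rw [hD1 _ _ this, hE1 _ _ hxy, Complex.exp_add]; ring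
  · intro x y hxy
    have : g x ≠ g y := fun h => hxy (g.injective h)
    simp only [hE2 _ _ hxy, hD2 _ _ this]

lemma HasE.symm {g : ℂ ≃ₜ ℂ} (hg : HasE g) : HasE g.symm := by
  obtain ⟨E, hE, hE1, hE2⟩ := hg
  refine ⟨fun p => - E (g.symm p.1, g.symm p.2), ?_, ?_, ?_⟩
  · refine (hE.comp (by fun_prop) ?_).neg
    intro p hp
    exact fun h => hp (g.symm.injective h)
  · intro x y hxy
    have : g.symm x ≠ g.symm y := fun h => hxy (g.symm.injective h)
    have := hE1 _ _ this
    simp only [Homeomorph.apply_symm_apply] at this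
    rw [this, mul_assoc, ← Complex.exp_add]; simp
  · intro x y hxy
    have : g.symm x ≠ g.symm y := fun h => hxy (g.symm.injective h)
    simp only [hE2 _ _ this]

/-- No points of period two for fixed point free maps. -/
lemma no_two_periodic {h : ℂ ≃ₜ ℂ} (hE : HasE h) (hfix : ∀ x, h x ≠ x) (x : ℂ) :
    h (h x) ≠ x := by
  intro hx
  obtain ⟨E, hE, hE1, hE2⟩ := hE
  obtain ⟨v, hv, hv1⟩ := exists_log (fun x => h x - x) (by fun_prop)
    (fun x => sub_ne_zero.2 (hfix x))
  have hc : Continuous fun x => E (h x, x) := by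
    have : ContinuousOn (fun x => E (h x, x)) univ :=
      hE.comp (by fun_prop) (fun x _ => hfix x)
    simpa using this
  have key := log_diff_const (fun x => v (h x)) (fun x => v x + E (h x, x)) (by fun_prop)
    (hv.add hc) (by
      intro a
      rw [Complex.exp_add, hv1, hv1, hE1 _ _ (hfix a)]) x (h x)
  simp only [hx] at key
  have hne := hfix x
  rw [← hE2 _ _ hne] at key
  have h2 : E (h x, x) = -(v (h x) - (v x + E (h x, x))) := by linear_combination (-1/2) * key
  have h3 : Complex.exp (E (h x, x)) = 1 := by
    rw [h2, Complex.exp_neg, Complex.exp_sub, Complex.exp_add, hv1, hv1, ← hE1 _ _ hne, div_self,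
      inv_one]
    exact sub_ne_zero.2 (hfix _)
  have h4 := hE1 _ _ hne
  rw [h3, hx] at h4
  apply hne
  linear_combination (-1/2) * h4
/-! ### Pushes -/

/-- If `g` is a contraction, `id + g` is a homeomorphism in the class. -/
lemma exists_push_aux (g : ℂ → ℂ) (hg : ∀ x y, ‖g x - g y‖ ≤ (1/2 : ℝ) * ‖x - y‖) :
    ∃ φ : ℂ ≃ₜ ℂ, HasE φ ∧ ∀ x, φ x = x + g x := by
  have happ : ApproximatesLinearOn (fun x => x + g x)
      ((ContinuousLinearEquiv.refl ℝ ℂ : ℂ ≃L[ℝ] ℂ) : ℂ →L[ℝ] ℂ) univ (1/2 : NNReal) := by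
    intro x _ y _
    have : x + g x - (y + g y) - ((ContinuousLinearEquiv.refl ℝ ℂ : ℂ ≃L[ℝ] ℂ) : ℂ →L[ℝ] ℂ) (x - y)
        = g x - g y := by simp; ring
    rw [this]
    simpa using hg x y
  have hφ : ∃ φ : ℂ ≃ₜ ℂ, ∀ x, φ x = x + g x := by
    refine ⟨happ.toHomeomorph _ (Or.inr ?_), fun x => rfl⟩
    have h1 : ‖(((ContinuousLinearEquiv.refl ℝ ℂ).symm : ℂ ≃L[ℝ] ℂ) : ℂ →L[ℝ] ℂ)‖₊ = 1 := by
      apply NNReal.eq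
      simp
    rw [h1]
    simp only [inv_one]
    rw [← NNReal.coe_lt_coe]
    push_cast
    norm_num
  obtain ⟨φ, hφ⟩ := hφ
  refine ⟨φ, ?_, hφ⟩
  have hslit : ∀ x y, x ≠ y → (φ x - φ y) / (x - y) ∈ Complex.slitPlane := by
    intro x y hxy
    have h0 : x - y ≠ 0 := sub_ne_zero.2 hxy
    have h0' : 0 < ‖x - y‖ := norm_pos_iff.2 h0
    left
    have : (φ x - φ y) / (x - y) = 1 + (g x - g y) / (x - y) := by
      rw [hφ, hφ]; field_simp; ring
    rw [this]
    have hb : ‖(g x - g y) / (x - y)‖ ≤ 1/2 := by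
      rw [norm_div, div_le_iff₀ h0']
      exact hg x y
    have := Complex.abs_re_le_norm ((g x - g y) / (x - y))
    have := (abs_le.1 (this.trans hb)).1
    simp only [Complex.add_re, Complex.one_re]
    linarith
  refine ⟨fun p => Complex.log ((φ p.1 - φ p.2) / (p.1 - p.2)), ?_, ?_, ?_⟩
  · refine ContinuousOn.clog (ContinuousOn.div (by fun_prop) (by fun_prop) ?_) ?_
    · intro p hp
      exact sub_ne_zero.2 hp
    · intro p hp
      exact hslit _ _ hp
  · intro x y hxy
    have h0 : x - y ≠ 0 := sub_ne_zero.2 hxy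
    simp only
    rw [Complex.exp_log (Complex.slitPlane_ne_zero (hslit _ _ hxy))]
    field_simp
  · intro x y hxy
    simp only
    rw [← neg_sub (φ y), ← neg_sub y, neg_div_neg_eq]

/-- `b` is reachable from `a` by a homeomorphism of the class supported in `W`. -/
def Reach (W : Set ℂ) (a b : ℂ) : Prop :=
  ∃ φ : ℂ ≃ₜ ℂ, HasE φ ∧ φ a = b ∧ (∀ x, x ∉ W → φ x = x) ∧ ∀ x, x ∈ W → φ x ∈ W

lemma mem_of_supp {W : Set ℂ} {φ : ℂ ≃ₜ ℂ} (h : ∀ x, x ∉ W → φ x = x) (x : ℂ) (hx : x ∈ W) :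
    φ x ∈ W := by
  by_contra hn
  have := h _ hn
  have := φ.injective this
  rw [this] at hn
  exact hn hx

lemma reach_local {W : Set ℂ} (hW : IsOpen W) {a : ℂ} (ha : a ∈ W) :
    ∃ ε > 0, ∀ b ∈ ball a ε, Reach W a b := by
  obtain ⟨r, hr, hrW⟩ := Metric.isOpen_iff.1 hW a ha
  refine ⟨r / 2, by positivity, fun b hb => ?_⟩
  rw [mem_ball, dist_eq_norm] at hb
  let χ : ℂ → ℝ := fun z => max 0 (1 - ‖z - a‖ / r)
  have hχ : ∀ x y, |χ x - χ y| ≤ ‖x - y‖ / r := by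
    intro x y
    have h1 : |χ x - χ y| ≤ |(1 - ‖x - a‖ / r) - (1 - ‖y - a‖ / r)| := by
      have := abs_max_sub_max_le_abs (1 - ‖x - a‖ / r) (1 - ‖y - a‖ / r) 0
      simpa only [χ, max_comm (0 : ℝ)] using this
    refine h1.trans ?_
    have : (1 - ‖x - a‖ / r) - (1 - ‖y - a‖ / r) = (‖y - a‖ - ‖x - a‖) / r := by ring
    rw [this, abs_div, abs_of_pos hr]
    gcongr
    refine (abs_norm_sub_norm_le _ _).trans ?_
    rw [sub_sub_sub_cancel_right, norm_sub_rev]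
  obtain ⟨φ, hφE, hφ⟩ := exists_push_aux (fun z => (χ z : ℂ) * (b - a)) (by
    intro x y
    rw [← sub_mul, norm_mul, ← Complex.ofReal_sub, Complex.norm_real, Real.norm_eq_abs]
    calc |χ x - χ y| * ‖b - a‖ ≤ (‖x - y‖ / r) * (r / 2) := by
          gcongr
          exact hχ x y
      _ = _ := by field_simp)
  have hsupp : ∀ x, x ∉ W → φ x = x := by
    intro x hx
    have hxb : x ∉ ball a r := fun h => hx (hrW h)
    rw [mem_ball, dist_eq_norm, not_lt] at hxb
    have : χ x = 0 := by
      simp only [χ]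
      apply max_eq_left
      have : 1 ≤ ‖x - a‖ / r := by rwa [le_div_iff₀ hr, one_mul]
      linarith
    rw [hφ, this]; simp
  refine ⟨φ, hφE, ?_, hsupp, mem_of_supp hsupp⟩
  rw [hφ]; simp [χ]

lemma Reach.refl (W : Set ℂ) (a : ℂ) : Reach W a a :=
  ⟨Homeomorph.refl ℂ, HasE.refl, rfl, fun _ _ => rfl, fun _ h => h⟩

lemma Reach.trans {W : Set ℂ} {a b c : ℂ} (h1 : Reach W a b) (h2 : Reach W b c) :
    Reach W a c := by
  obtain ⟨φ, hφ, hab, hs, hm⟩ := h1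
  obtain ⟨ψ, hψ, hbc, hs', hm'⟩ := h2
  refine ⟨φ.trans ψ, hφ.trans hψ, by simp [hab, hbc], ?_, ?_⟩
  · intro x hx; simp [hs x hx, hs' x hx]
  · intro x hx; exact hm' _ (hm _ hx)

lemma Reach.symm {W : Set ℂ} {a b : ℂ} (h1 : Reach W a b) : Reach W b a := by
  obtain ⟨φ, hφ, hab, hs, hm⟩ := h1
  have hs' : ∀ x, x ∉ W → φ.symm x = x := by
    intro x hx
    rw [Homeomorph.symm_apply_eq, hs x hx]
  exact ⟨φ.symm, hφ.symm, by simp [← hab], hs', mem_of_supp hs'⟩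

lemma reach_of_connected {W : Set ℂ} (hW : IsOpen W) (hc : IsPreconnected W) {a b : ℂ}
    (ha : a ∈ W) (hb : b ∈ W) : Reach W a b := by
  by_contra hn
  have h1 : IsOpen {x | x ∈ W ∧ Reach W a x} := by
    rw [Metric.isOpen_iff]
    rintro x ⟨hx, hr⟩
    obtain ⟨ε, hε, h⟩ := reach_local hW hx
    obtain ⟨δ, hδ, h'⟩ := Metric.isOpen_iff.1 hW x hx
    refine ⟨min ε δ, lt_min hε hδ, fun y hy => ⟨h' (ball_subset_ball (min_le_right _ _) hy),
      hr.trans (h y (ball_subset_ball (min_le_left _ _) hy))⟩⟩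
  have h2 : IsOpen {x | x ∈ W ∧ ¬ Reach W a x} := by
    rw [Metric.isOpen_iff]
    rintro x ⟨hx, hr⟩
    obtain ⟨ε, hε, h⟩ := reach_local hW hx
    obtain ⟨δ, hδ, h'⟩ := Metric.isOpen_iff.1 hW x hx
    refine ⟨min ε δ, lt_min hε hδ, fun y hy => ⟨h' (ball_subset_ball (min_le_right _ _) hy),
      fun hh => hr (hh.trans (h y (ball_subset_ball (min_le_left _ _) hy)).symm)⟩⟩
  obtain ⟨x, -, hx1, hx2⟩ := hc _ _ h1 h2 (fun x hx => by
    by_cases h : Reach W a x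
    · exact Or.inl ⟨hx, h⟩
    · exact Or.inr ⟨hx, h⟩) ⟨a, ha, ha, Reach.refl W a⟩ ⟨b, hb, hb, hn⟩
  exact hx2.2 hx1.2

/-- Pushing along a segment, with support in a given neighbourhood. -/
lemma reach_segment {V : Set ℂ} (hV : IsOpen V) {a b : ℂ} (h : segment ℝ a b ⊆ V) :
    ∃ φ : ℂ ≃ₜ ℂ, HasE φ ∧ φ a = b ∧ ∀ x, x ∉ V → φ x = x := by
  have hcpt : IsCompact (segment ℝ a b) := by
    rw [segment_eq_image_lineMap]
    exact isCompact_Icc.image (by fun_prop)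
  obtain ⟨δ, hδ, hδV⟩ := hcpt.exists_thickening_subset_open hV h
  have hconv : Convex ℝ (Metric.thickening δ (segment ℝ a b)) :=
    (convex_segment a b).thickening δ
  have hsub := Metric.self_subset_thickening hδ (segment ℝ a b)
  obtain ⟨φ, hφ, hab, hs, -⟩ := reach_of_connected Metric.isOpen_thickening hconv.isPreconnected
    (hsub (left_mem_segment ℝ a b)) (hsub (right_mem_segment ℝ a b))
  exact ⟨φ, hφ, hab, fun x hx => hs x fun h => hx (hδV h)⟩
/-! ### Brouwer's lemma: no periodic points -/

lemma fixfree_push {h φ : ℂ ≃ₜ ℂ} {V : Set ℂ} (hfix : ∀ x, h x ≠ x)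
    (hs : ∀ x, x ∉ V → φ x = x) (hfree : ∀ u ∈ V, h u ∉ V) (u : ℂ) : (h.trans φ) u ≠ u := by
  intro hu
  rw [Homeomorph.trans_apply] at hu
  by_cases hV : h u ∈ V
  · have := mem_of_supp hs _ hV
    rw [hu] at this
    exact hfree u this hV
  · rw [hs _ hV] at hu
    exact hfix u hu

lemma isCompact_seg (a b : ℂ) : IsCompact (segment ℝ a b) := by
  rw [segment_eq_image_lineMap]
  exact isCompact_Icc.image (by fun_prop)

lemma exists_free_nhds (h : ℂ ≃ₜ ℂ) {S C : Set ℂ} (hS : IsCompact S) (hC : C.Finite)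
    (hfree : ∀ u ∈ S, h u ∉ S) (hSC : ∀ u ∈ C, u ∉ S) :
    ∃ V : Set ℂ, IsOpen V ∧ S ⊆ V ∧ (∀ u ∈ C, u ∉ V) ∧ ∀ u ∈ V, h u ∉ V := by
  have hd : Disjoint S (h '' S) := by
    rw [Set.disjoint_left]
    rintro _ hx ⟨u, hu, rfl⟩
    exact hfree u hu hx
  obtain ⟨A, B, hA, hB, hSA, hSB, hAB⟩ :=
    SeparatedNhds.of_isCompact_isCompact hS (hS.image h.continuous) hd
  refine ⟨A ∩ h ⁻¹' B ∩ Cᶜ, (hA.inter (hB.preimage h.continuous)).inter hC.isClosed.isOpen_compl,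
    ?_, ?_, ?_⟩
  · intro x hx
    exact ⟨⟨hSA hx, hSB ⟨x, hx, rfl⟩⟩, fun hc => hSC x hc hx⟩
  · intro u hu hV
    exact hV.2 hu
  · intro u hu hV
    exact Set.disjoint_left.1 hAB hV.1.1 hu.1.2

/-- Closing an orbit along a free segment. -/
lemma close_orbit {h : ℂ ≃ₜ ℂ} (hE : HasE h) (hfix : ∀ x, h x ≠ x) (x : ℂ) (j : ℕ) (hj : 1 ≤ j)
    (hfree : ∀ u ∈ segment ℝ (h^[j] x) x, h u ∉ segment ℝ (h^[j] x) x)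
    (hav : ∀ i, 1 ≤ i → i < j → h^[i] x ∉ segment ℝ (h^[j] x) x) :
    ∃ h' : ℂ ≃ₜ ℂ, HasE h' ∧ (∀ x, h' x ≠ x) ∧ h'^[j] x = x := by
  obtain ⟨V, hV, hSV, hCV, hVfree⟩ := exists_free_nhds h (C := (fun i => h^[i] x) '' Set.Ico 1 j)
    (isCompact_seg (h^[j] x) x) ((Set.finite_Ico 1 j).image _) hfree (by
      rintro _ ⟨i, hi, rfl⟩
      exact hav i hi.1 hi.2)
  obtain ⟨φ, hφ, hab, hs⟩ := reach_segment hV hSV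
  refine ⟨h.trans φ, hE.trans hφ, fixfree_push hfix hs hVfree, ?_⟩
  have hind : ∀ i, i < j → (h.trans φ)^[i] x = h^[i] x := by
    intro i
    induction i with
    | zero => intro _; rfl
    | succ k ih =>
      intro hk
      rw [Function.iterate_succ_apply', ih (by omega), Homeomorph.trans_apply,
        ← Function.iterate_succ_apply' h]
      exact hs _ (hCV _ ⟨k + 1, ⟨by omega, hk⟩, rfl⟩)
  obtain ⟨k, rfl⟩ : ∃ k, j = k + 1 := ⟨j - 1, by omega⟩
  rw [Function.iterate_succ_apply', hind k (by omega), Homeomorph.trans_apply,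
    ← Function.iterate_succ_apply' h, hab]

lemma seg_sphere {x p q z : ℂ} {r : ℝ} (hp : dist p x ≤ r) (hq : dist q x ≤ r)
    (hz : z ∈ segment ℝ p q) (hzr : dist z x = r) : z = p ∨ z = q := by
  by_cases hpq : p = q
  · subst hpq
    rw [segment_same] at hz
    exact Or.inl hz
  rw [← insert_endpoints_openSegment] at hz
  rcases hz with h | h | h
  · exact Or.inl h
  · exact Or.inr h
  · exfalso
    have := (strictConvex_closedBall ℝ x r).openSegment_subset (mem_closedBall.2 hp)
      (mem_closedBall.2 hq) hpq h
    rw [interior_closedBall' , mem_ball] at this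
    linarith

lemma seg_ball {x p q z : ℂ} {r : ℝ} (hp : dist p x ≤ r) (hq : dist q x ≤ r)
    (hz : z ∈ segment ℝ p q) : dist z x ≤ r :=
  (convex_closedBall x r).segment_subset (mem_closedBall.2 hp) (mem_closedBall.2 hq) hz

/-- The critical disc centred at `x`. -/
lemma critical_disc {h : ℂ ≃ₜ ℂ} (hfix : ∀ x, h x ≠ x) (x : ℂ) :
    ∃ (r : ℝ) (y : ℂ), 0 < r ∧ dist y x = r ∧ dist (h y) x = r ∧
      ∀ u, dist u x ≤ r → dist (h u) x ≤ r → dist u x = r ∧ dist (h u) x = r := by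
  obtain ⟨y, hy⟩ := Continuous.exists_forall_le (f := fun u => max (dist u x) (dist (h u) x))
    (by fun_prop)
    (tendsto_atTop_mono (fun u => le_max_left _ _) (tendsto_dist_right_cocompact_atTop x))
  set r := max (dist y x) (dist (h y) x) with hr
  have hr0 : 0 < r := by
    by_contra hn
    have h1 : dist y x ≤ 0 := (le_max_left _ _).trans (not_lt.1 hn)
    have h2 : dist (h y) x ≤ 0 := (le_max_right _ _).trans (not_lt.1 hn)
    have h1 := dist_le_zero.1 h1
    have h2 := dist_le_zero.1 h2
    exact hfix y (h2.trans h1.symm)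
  have hS : ∀ u, dist u x ≤ r → dist (h u) x ≤ r → dist u x = r ∧ dist (h u) x = r := by
    intro u h1 h2
    refine ⟨le_antisymm h1 (not_lt.1 fun hlt => ?_), le_antisymm h2 (not_lt.1 fun hlt => ?_)⟩
    · have hcl : h u ∈ closure (ball x r) := by
        rw [closure_ball x hr0.ne']; exact h2
      have hop : IsOpen {w | dist (h.symm w) x < r} := isOpen_lt (by fun_prop) (by fun_prop)
      obtain ⟨w, hw1, hw2⟩ := mem_closure_iff.1 hcl _ hop (by simpa using hlt)
      have := hy (h.symm w)
      simp only [Homeomorph.apply_symm_apply] at this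
      exact absurd (this.trans_lt (max_lt hw1 hw2)) (lt_irrefl _)
    · have hcl : u ∈ closure (ball x r) := by
        rw [closure_ball x hr0.ne']; exact h1
      have hop : IsOpen {w | dist (h w) x < r} := isOpen_lt (by fun_prop) (by fun_prop)
      obtain ⟨w, hw1, hw2⟩ := mem_closure_iff.1 hcl _ hop hlt
      exact absurd ((hy w).trans_lt (max_lt hw2 hw1)) (lt_irrefl _)
  have := hS y (le_max_left _ _) (le_max_right _ _)
  exact ⟨r, y, hr0, this.1, this.2, hS⟩

/-- Brouwer's lemma. -/
theorem brouwer_no_periodic (n : ℕ) : 1 ≤ n → ∀ h : ℂ ≃ₜ ℂ, HasE h → (∀ x, h x ≠ x) →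
    ∀ x, h^[n] x ≠ x := by
  induction n using Nat.strong_induction_on with
  | _ n ih =>
  intro hn h hE hfix x hx
  rcases (show n = 1 ∨ n = 2 ∨ 3 ≤ n by omega) with rfl | rfl | hn3
  · exact hfix x hx
  · exact no_two_periodic hE hfix x hx
  obtain ⟨r, y, hr0, hy, hhy, hS⟩ := critical_disc hfix x
  have hxr : dist x x ≤ r := by rw [dist_self]; exact hr0.le
  -- radii are free
  have hrad : ∀ q, dist q x ≤ r → ∀ u ∈ segment ℝ x q, h u ∉ segment ℝ x q := by
    intro q hq u hu hhu
    obtain ⟨h1, h2⟩ := hS u (seg_ball hxr hq hu) (seg_ball hxr hq hhu)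
    have e1 := seg_sphere hxr hq hu h1
    have e2 := seg_sphere hxr hq hhu h2
    have hu' : u = q := by
      rcases e1 with e | e
      · rw [e, dist_self] at h1; exact absurd h1 hr0.ne
      · exact e
    have hhu' : h u = q := by
      rcases e2 with e | e
      · rw [e, dist_self] at h2; exact absurd h2 hr0.ne
      · exact e
    exact hfix u (hhu'.trans hu'.symm)
  -- radii contain no other point of the orbit
  have hrad2 : ∀ q, dist q x ≤ r → ∀ j, 1 ≤ j → j < n → h^[j] x ∉ segment ℝ x q := by
    intro q hq j hj1 hjn hmem
    have hex : ∃ j, 1 ≤ j ∧ h^[j] x ∈ segment ℝ x q := ⟨j, hj1, hmem⟩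
    obtain ⟨hk1, hk2⟩ := Nat.find_spec hex
    have hkj : Nat.find hex ≤ j := Nat.find_min' hex ⟨hj1, hmem⟩
    have hmin : ∀ i, 1 ≤ i → i < Nat.find hex → h^[i] x ∉ segment ℝ x q :=
      fun i hi1 hi2 hi3 => Nat.find_min hex hi2 ⟨hi1, hi3⟩
    generalize Nat.find hex = k at *
    have hsub : segment ℝ (h^[k] x) x ⊆ segment ℝ x q :=
      (convex_segment x q).segment_subset hk2 (left_mem_segment ℝ x q)
    obtain ⟨h', hE', hfix', hper⟩ := close_orbit hE hfix x k hk1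
      (fun u hu hhu => hrad q hq u (hsub hu) (hsub hhu))
      (fun i hi1 hi2 hi3 => hmin i hi1 hi2 (hsub hi3))
    exact ih k (by omega) hk1 h' hE' hfix' x hper
  -- no intersection with the second iterate
  have hsec : ∀ u ∈ segment ℝ x y, h (h u) ∉ segment ℝ x (h y) := by
    intro u hu hw
    have hur := seg_ball hxr hy.le hu
    have hwr := seg_ball hxr hhy.le hw
    have hcon : dist u x = r → dist (h (h u)) x = r → False := by
      intro h1 h2
      have hu' : u = y := by
        rcases seg_sphere hxr hy.le hu h1 with e | e
        · rw [e, dist_self] at h1; exact absurd h1 hr0.ne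
        · exact e
      have hw' : h (h u) = h y := by
        rcases seg_sphere hxr hhy.le hw h2 with e | e
        · rw [e, dist_self] at h2; exact absurd h2 hr0.ne
        · exact e
      rw [hu'] at hw'
      exact hfix _ hw'
    have hfree : ∀ z ∈ segment ℝ (h^[2] u) u, h z ∉ segment ℝ (h^[2] u) u := by
      intro z hz hhz
      change z ∈ segment ℝ (h (h u)) u at hz
      change h z ∈ segment ℝ (h (h u)) u at hhz
      obtain ⟨h1, h2⟩ := hS z (seg_ball hwr hur hz) (seg_ball hwr hur hhz)
      rcases seg_sphere hwr hur hz h1 with e | e <;> rcases seg_sphere hwr hur hhz h2 with e' | e'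
      · exact hfix z (e'.trans e.symm)
      · exact hcon (e' ▸ h2) (e ▸ h1)
      · exact hcon (e ▸ h1) (e' ▸ h2)
      · exact hfix z (e'.trans e.symm)
    obtain ⟨h', hE', hfix', hper⟩ := close_orbit hE hfix u 2 (by norm_num) hfree (by
      intro i hi1 hi2
      have : i = 1 := by omega
      subst this
      exact hfree u (right_mem_segment ℝ _ _))
    exact no_two_periodic hE' hfix' u hper
  -- shortening of the orbit by one
  let C : Set ℂ := (fun i => h^[i] x) '' Set.Ico 1 n
  have hC : C.Finite := (Set.finite_Ico 1 n).image _
  obtain ⟨V₁, hV₁, hSV₁, hCV₁, hfree₁⟩ := exists_free_nhds h (C := C) (isCompact_seg x (h y)) hC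
    (hrad _ hhy.le) (by rintro _ ⟨i, hi, rfl⟩; exact hrad2 _ hhy.le i hi.1 hi.2)
  obtain ⟨V₂, hV₂, hSV₂, hCV₂, hfree₂⟩ := exists_free_nhds h (C := C) (isCompact_seg x y) hC
    (hrad _ hy.le) (by rintro _ ⟨i, hi, rfl⟩; exact hrad2 _ hy.le i hi.1 hi.2)
  obtain ⟨A, B, hA, hB, hSA, hSB, hAB⟩ := SeparatedNhds.of_isCompact_isCompact
    (isCompact_seg x (h y)) ((isCompact_seg x y).image (h.continuous.comp h.continuous)) (by
      rw [Set.disjoint_left]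
      rintro _ hz ⟨u, hu, rfl⟩
      exact hsec u hu hz)
  obtain ⟨φ₁, hφ₁, hab₁, hs₁⟩ := reach_segment (hV₁.inter hA) (subset_inter hSV₁ hSA)
  obtain ⟨φ₂, hφ₂, hab₂, hs₂⟩ := reach_segment (V := V₂ ∩ (h ∘ h) ⁻¹' B) (a := y) (b := x)
    (hV₂.inter (hB.preimage (h.continuous.comp h.continuous)))
    (by
      rw [segment_symm]
      exact subset_inter hSV₂ (fun u hu => hSB ⟨u, hu, rfl⟩))
  have hfixg := fixfree_push (h := h) (φ := φ₁) hfix hs₁ (fun u hu hhu => hfree₁ u hu.1 hhu.1)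
  let ψ : ℂ ≃ₜ ℂ := h.symm.trans (φ₂.trans h)
  have hψ : HasE ψ := hE.symm.trans (hφ₂.trans hE)
  have hψs : ∀ w, w ∉ h.symm ⁻¹' (V₂ ∩ (h ∘ h) ⁻¹' B) → ψ w = w := by
    intro w hw
    change h (φ₂ (h.symm w)) = w
    rw [hs₂ _ hw, Homeomorph.apply_symm_apply]
  have hfix' := fixfree_push (h := h.trans φ₁) (φ := ψ) hfixg hψs (by
    intro w hw hw'
    obtain ⟨v, rfl⟩ := h.surjective w
    simp only [mem_preimage, Homeomorph.symm_apply_apply, Homeomorph.trans_apply] at hw hw'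
    rw [hs₁ (h (h v)) (fun hh => Set.disjoint_left.1 hAB hh.2 hw.2), Homeomorph.symm_apply_apply] at hw'
    exact hfree₂ v hw.1 hw'.1)
  have hstep : ∀ i, 1 ≤ i → i + 1 < n →
      ((h.trans φ₁).trans ψ) (h^[i] x) = h^[i + 1] x := by
    intro i hi1 hi2
    change ψ (φ₁ (h (h^[i] x))) = _
    rw [← Function.iterate_succ_apply' h,
      hs₁ (h^[i + 1] x) (fun hh => hCV₁ _ ⟨i + 1, ⟨by omega, hi2⟩, rfl⟩ hh.1)]
    apply hψs
    rw [Function.iterate_succ_apply']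
    simp only [mem_preimage, Homeomorph.symm_apply_apply]
    exact fun hh => hCV₂ _ ⟨i, ⟨by omega, by omega⟩, rfl⟩ hh.1
  have hind : ∀ i, i + 1 < n → ((h.trans φ₁).trans ψ)^[i] (h x) = h^[i + 1] x := by
    intro i
    induction i with
    | zero => intro _; rfl
    | succ k ihk =>
      intro hk
      rw [Function.iterate_succ_apply', ihk (by omega), hstep (k + 1) (by omega) hk]
  refine ih (n - 1) (by omega) (by omega) _ ((hE.trans hφ₁).trans hψ) hfix' (h x) ?_
  obtain ⟨k, rfl⟩ : ∃ k, n = k + 2 := ⟨n - 2, by omega⟩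
  change ((h.trans φ₁).trans ψ)^[k + 1] (h x) = h x
  rw [Function.iterate_succ_apply', hind k (by omega)]
  change ψ (φ₁ (h (h^[k + 1] x))) = _
  rw [← Function.iterate_succ_apply' h, hx, hab₁]
  change h (φ₂ (h.symm (h y))) = h x
  rw [Homeomorph.symm_apply_apply, hab₂]
/-! ### A version of Franks' lemma -/

lemma multi_push {W : ℤ → Set ℂ} (hWo : ∀ j, IsOpen (W j)) (hWc : ∀ j, IsPreconnected (W j))
    (hWd : ∀ i j x, x ∈ W i → x ∈ W j → i = j) (a b : ℤ → ℂ) (S : Finset ℤ)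
    (ha : ∀ j ∈ S, a j ∈ W j) (hb : ∀ j ∈ S, b j ∈ W j) :
    ∃ Φ : ℂ ≃ₜ ℂ, HasE Φ ∧ (∀ j ∈ S, Φ (a j) = b j) ∧ (∀ x, (∀ j ∈ S, x ∉ W j) → Φ x = x) ∧
      ∀ j x, x ∈ W j → Φ x ∈ W j := by
  induction S using Finset.induction_on with
  | empty => exact ⟨Homeomorph.refl ℂ, HasE.refl, by simp, fun _ _ => rfl, fun _ _ h => h⟩
  | insert k S hk ih =>
    obtain ⟨Φ, hΦ, h1, h2, h3⟩ := ih (fun j hj => ha j (Finset.mem_insert_of_mem hj))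
      (fun j hj => hb j (Finset.mem_insert_of_mem hj))
    have hak := ha k (Finset.mem_insert_self _ _)
    have hbk := hb k (Finset.mem_insert_self _ _)
    obtain ⟨φ, hφ, hab, hs, hm⟩ := reach_of_connected (hWo k) (hWc k) hak hbk
    refine ⟨Φ.trans φ, hΦ.trans hφ, ?_, ?_, ?_⟩
    · intro j hj
      rw [Homeomorph.trans_apply]
      rcases Finset.mem_insert.1 hj with rfl | hj'
      · rw [h2 (a j) (fun i hi hx => hk (hWd _ _ _ hak hx ▸ hi)), hab]
      · rw [h1 j hj']
        apply hs
        intro hx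
        exact hk (hWd _ _ _ hx (hb j hj) ▸ hj')
    · intro x hx
      rw [Homeomorph.trans_apply, h2 x (fun j hj => hx j (Finset.mem_insert_of_mem hj)),
        hs x (hx k (Finset.mem_insert_self _ _))]
    · intro j x hx
      rw [Homeomorph.trans_apply]
      have hx' := h3 j x hx
      by_cases hjk : Φ x ∈ W k
      · have := hWd _ _ _ hx' hjk
        subst this
        exact hm _ hjk
      · rwa [hs _ hjk]

theorem no_periodic_chain {g : ℂ ≃ₜ ℂ} (hE : HasE g) (hfix : ∀ x, g x ≠ x)
    {W : ℤ → Set ℂ} (hWo : ∀ j, IsOpen (W j)) (hWc : ∀ j, IsPreconnected (W j))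
    (hWd : ∀ i j x, x ∈ W i → x ∈ W j → i = j) (hWf : ∀ j, ∀ u ∈ W j, g u ∉ W j)
    (d : ℤ → ℂ) (N : ℤ → ℕ) (s : ℤ → ℤ) (hd : ∀ j, d j ∈ W j) (hN : ∀ j, 1 ≤ N j)
    (hret : ∀ j, g^[N j] (d j) ∈ W (s j))
    (hnot : ∀ j l, 0 < l → l < N j → ∀ i, g^[l] (d j) ∉ W i)
    (S : Finset ℤ) (hS : S.Nonempty) (hSs : ∀ j ∈ S, s j ∈ S) (hinj : Set.InjOn s S) : False := by
  have ha0 : ∀ j ∈ S, g^[N (Function.invFunOn s S (s j))] (d (Function.invFunOn s S (s j))) =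
      g^[N j] (d j) := by
    intro j hj
    have : Function.invFunOn s S (s j) = j := hinj.leftInvOn_invFunOn hj
    rw [this]
  obtain ⟨Φ, hΦ, h1, h2, h3⟩ := multi_push hWo hWc hWd
    (fun i => g^[N (Function.invFunOn s S i)] (d (Function.invFunOn s S i))) d (S.image s)
    (by
      intro i hi
      obtain ⟨j, hj, rfl⟩ := Finset.mem_image.1 hi
      simp only [ha0 j hj]
      exact hret j)
    (fun i _ => hd i)
  have hpush : ∀ j ∈ S, Φ (g^[N j] (d j)) = d (s j) := by
    intro j hj
    rw [← ha0 j hj]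
    exact h1 (s j) (Finset.mem_image_of_mem s hj)
  have hfix' : ∀ u, (g.trans Φ) u ≠ u := by
    intro u hu
    rw [Homeomorph.trans_apply] at hu
    by_cases hex : ∃ j, g u ∈ W j
    · obtain ⟨j, hj⟩ := hex
      have := h3 j _ hj
      rw [hu] at this
      exact hWf j u this hj
    · rw [h2 _ (fun j _ hj => hex ⟨j, hj⟩)] at hu
      exact hfix u hu
  have hone : ∀ j ∈ S, (g.trans Φ)^[N j] (d j) = d (s j) := by
    intro j hj
    have hind : ∀ l, l < N j → (g.trans Φ)^[l] (d j) = g^[l] (d j) := by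
      intro l
      induction l with
      | zero => intro _; rfl
      | succ k ih =>
        intro hk
        rw [Function.iterate_succ_apply', ih (by omega), Homeomorph.trans_apply,
          ← Function.iterate_succ_apply' g]
        exact h2 _ (fun i _ => hnot j (k + 1) (by omega) hk i)
    have hNj := hN j
    have hp := hpush j hj
    obtain ⟨k, hk⟩ : ∃ k, N j = k + 1 := ⟨N j - 1, by omega⟩
    rw [hk] at hp ⊢
    rw [Function.iterate_succ_apply', hind k (by omega), Homeomorph.trans_apply,
      ← Function.iterate_succ_apply' g, hp]
  have hmany : ∀ q : ℕ, ∀ j ∈ S, s^[q] j ∈ S ∧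
      ∃ T, q ≤ T ∧ (g.trans Φ)^[T] (d j) = d (s^[q] j) := by
    intro q
    induction q with
    | zero => intro j hj; exact ⟨hj, 0, le_rfl, rfl⟩
    | succ k ih =>
      intro j hj
      obtain ⟨hmem, T, hT, hTd⟩ := ih j hj
      rw [Function.iterate_succ_apply']
      refine ⟨hSs _ hmem, N (s^[k] j) + T, ?_, ?_⟩
      · have := hN (s^[k] j); omega
      · rw [Function.iterate_add_apply, hTd, hone _ hmem]
  obtain ⟨j₀, hj₀⟩ := hS
  obtain ⟨p, q, hpq, heq⟩ := Finite.exists_ne_map_eq_of_infinite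
    (fun q : ℕ => (⟨s^[q] j₀, (hmany q j₀ hj₀).1⟩ : S))
  have heq' : s^[p] j₀ = s^[q] j₀ := congrArg Subtype.val heq
  wlog hlt : p < q generalizing p q
  · exact this q p hpq.symm heq.symm heq'.symm (by omega)
  obtain ⟨-, T, hT, hTd⟩ := hmany (q - p) _ (hmany p j₀ hj₀).1
  rw [← Function.iterate_add_apply, show q - p + p = q by omega, ← heq'] at hTd
  exact brouwer_no_periodic T (by omega) _ (hE.trans hΦ) hfix' _ hTd

theorem no_pos_neg_return {g : ℂ ≃ₜ ℂ} (hE : HasE g) (hfix : ∀ x, g x ≠ x)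
    {W : ℤ → Set ℂ} (hWo : ∀ j, IsOpen (W j)) (hWc : ∀ j, IsPreconnected (W j))
    (hWd : ∀ i j x, x ∈ W i → x ∈ W j → i = j) (hWf : ∀ j, ∀ u ∈ W j, g u ∉ W j)
    (d₁ d₂ : ℤ → ℂ) (N₁ N₂ : ℕ) (m₁ m₂ : ℤ) (hm₁ : m₁ < 0) (hm₂ : 0 < m₂)
    (hd₁ : ∀ j, d₁ j ∈ W j) (hd₂ : ∀ j, d₂ j ∈ W j) (hN₁ : 1 ≤ N₁) (hN₂ : 1 ≤ N₂)
    (hret₁ : ∀ j, g^[N₁] (d₁ j) ∈ W (j + m₁)) (hret₂ : ∀ j, g^[N₂] (d₂ j) ∈ W (j + m₂))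
    (hnot₁ : ∀ j l, 0 < l → l < N₁ → ∀ i, g^[l] (d₁ j) ∉ W i)
    (hnot₂ : ∀ j l, 0 < l → l < N₂ → ∀ i, g^[l] (d₂ j) ∉ W i) : False := by
  refine no_periodic_chain hE hfix hWo hWc hWd hWf
    (fun j => if 0 ≤ j then d₁ j else d₂ j) (fun j => if 0 ≤ j then N₁ else N₂)
    (fun j => if 0 ≤ j then j + m₁ else j + m₂) ?_ ?_ ?_ ?_ (Finset.Ico m₁ m₂)
    ⟨0, by simp [hm₁.le, hm₂]⟩ ?_ ?_
  · intro j; split_ifs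
    exacts [hd₁ j, hd₂ j]
  · intro j; split_ifs <;> assumption
  · intro j; split_ifs
    exacts [hret₁ j, hret₂ j]
  · intro j; split_ifs
    exacts [hnot₁ j, hnot₂ j]
  · intro j hj
    rw [Finset.mem_Ico] at hj ⊢
    split_ifs <;> omega
  · intro i hi j hj hij
    rw [Finset.mem_coe, Finset.mem_Ico] at hi hj
    dsimp only at hij
    split_ifs at hij <;> omega

/-! ### Lifting the isotopy to the universal cover of the punctured plane -/

lemma lift_isotopy {f : ℂ ≃ₜ ℂ} (I : HIsotopy f) (z' : ℂ) :
    ∃ Ht Kt : unitInterval × ℂ → ℂ, Continuous Ht ∧ Continuous Kt ∧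
      (∀ t w, Complex.exp (Ht (t, w)) = I.F t (z' + Complex.exp w) - I.F t z') ∧
      (∀ w, Ht (0, w) = w) ∧ (∀ t w, Kt (t, Ht (t, w)) = w) ∧
      (∀ t w, Ht (t, Kt (t, w)) = w) := by
  have hc := I.cont
  have hcs := I.cont_symm
  have hz0 : ∀ x, I.F 0 x = x := by intro x; rw [I.zero]; rfl
  have hz0s : ∀ x, (I.F 0).symm x = x := by intro x; rw [I.zero]; rfl
  have hc1 : ∀ {A : Type} [TopologicalSpace A] (a : A → unitInterval) (b : A → ℂ),
      Continuous a → Continuous b → Continuous fun x => I.F (a x) (b x) := by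
    intro A _ a b ha hb
    exact hc.comp (f := fun x => (((a x : unitInterval) : ℝ), b x)) (by fun_prop)
  have hc2 : ∀ {A : Type} [TopologicalSpace A] (a : A → unitInterval) (b : A → ℂ),
      Continuous a → Continuous b → Continuous fun x => (I.F (a x)).symm (b x) := by
    intro A _ a b ha hb
    exact hcs.comp (f := fun x => (((a x : unitInterval) : ℝ), b x)) (by fun_prop)
  obtain ⟨Ht, hHt, hHe, hH0⟩ := homotopy_log
    (fun p : unitInterval × ℂ => I.F p.1 (z' + Complex.exp p.2) - I.F p.1 z')
    ((hc1 _ _ continuous_fst (by fun_prop)).sub (hc1 _ _ continuous_fst (by fun_prop)))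
    (fun p h => by
      have := (I.F p.1).injective (sub_eq_zero.1 h)
      exact Complex.exp_ne_zero p.2 (by simp at this))
    (fun w => w) continuous_id (by intro a; simp [hz0])
  obtain ⟨Kt, hKt, hKe, hK0⟩ := homotopy_log
    (fun p : unitInterval × ℂ => (I.F p.1).symm (Complex.exp p.2 + I.F p.1 z') - z')
    ((hc2 _ _ continuous_fst ((by fun_prop : Continuous fun p : unitInterval × ℂ =>
      Complex.exp p.2).add (hc1 _ _ continuous_fst (by fun_prop)))).sub (by fun_prop))
    (fun p h => by
      have := sub_eq_zero.1 h
      rw [Homeomorph.symm_apply_eq] at this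
      exact Complex.exp_ne_zero p.2 (by simp at this))
    (fun w => w) continuous_id (by intro a; simp [hz0, hz0s])
  refine ⟨Ht, Kt, hHt, hKt, fun t w => hHe (t, w), hH0, ?_, ?_⟩
  · intro t w
    refine congrFun (log_unique (fun t : unitInterval => Kt (t, Ht (t, w))) (fun _ => w)
      (by fun_prop) (by fun_prop) ?_ 0 (by simp [hH0, hK0])) t
    intro s
    simp [hKe, hHe]
  · intro t w
    refine congrFun (log_unique (fun t : unitInterval => Ht (t, Kt (t, w))) (fun _ => w)
      (by fun_prop) (by fun_prop) ?_ 0 (by simp [hH0, hK0])) t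
    intro s
    simp [hKe, hHe]

lemma hasE_of_isotopy (Ht Kt : unitInterval × ℂ → ℂ) (hH : Continuous Ht)
    (h0 : ∀ w, Ht (0, w) = w) (hKH : ∀ t w, Kt (t, Ht (t, w)) = w)
    (h : ℂ ≃ₜ ℂ) (hh : ∀ w, h w = Ht (1, w)) : HasE h := by
  have hinj : ∀ t x y, x ≠ y → Ht (t, x) ≠ Ht (t, y) := by
    intro t x y hxy he
    apply hxy
    rw [← hKH t x, he, hKH]
  obtain ⟨L, hL, hLe, hL0⟩ := homotopy_log
    (A := {p : ℂ × ℂ // p.1 ≠ p.2})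
    (fun p => (Ht (p.1, p.2.1.1) - Ht (p.1, p.2.1.2)) / (p.2.1.1 - p.2.1.2))
    (by
      refine Continuous.div (by fun_prop) (by fun_prop) ?_
      intro p
      exact sub_ne_zero.2 p.2.2)
    (fun p => div_ne_zero (sub_ne_zero.2 (hinj _ _ _ p.2.2)) (sub_ne_zero.2 p.2.2))
    (fun _ => 0) continuous_const
    (by
      intro a
      rw [h0, h0, div_self (sub_ne_zero.2 a.2), Complex.exp_zero])
  refine ⟨fun p => if hp : p.1 ≠ p.2 then L (1, ⟨p, hp⟩) else 0, ?_, ?_, ?_⟩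
  · rw [continuousOn_iff_continuous_domRestrict]
    have : Set.domRestrict {p : ℂ × ℂ | p.1 ≠ p.2}
        (fun p => if hp : p.1 ≠ p.2 then L (1, ⟨p, hp⟩) else 0) = fun p => L (1, p) := by
      funext p
      have hp : p.1.1 ≠ p.1.2 := p.2
      exact dif_pos hp
    rw [this]
    exact hL.comp (f := fun p : {p : ℂ × ℂ // p.1 ≠ p.2} => ((1 : unitInterval), p))
      (by fun_prop)
  · intro x y hxy
    simp only [dif_pos (show (x, y).1 ≠ (x, y).2 from hxy)]
    rw [hLe, hh, hh, mul_div_cancel₀ _ (sub_ne_zero.2 hxy)]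
  · intro x y hxy
    simp only [dif_pos (show (x, y).1 ≠ (x, y).2 from hxy),
      dif_pos (show (y, x).1 ≠ (y, x).2 from hxy.symm)]
    refine congrFun (log_unique (fun t : unitInterval => L (t, ⟨(x, y), hxy⟩))
      (fun t : unitInterval => L (t, ⟨(y, x), hxy.symm⟩)) (by fun_prop) (by fun_prop) ?_ 0
      (by simp [hL0])) 1
    intro t
    rw [hLe, hLe]
    simp only
    rw [← neg_sub, ← neg_sub x y, div_neg, neg_div]

lemma angVar_eq (γ : ℝ → ℂ) (L : ℝ → ℂ) (hL : ContinuousOn L (Set.Icc 0 1))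
    (h : ∀ t ∈ Set.Icc (0 : ℝ) 1, γ t = Complex.exp (L t)) :
    angVar γ = ((L 1).im - (L 0).im) / (2 * Real.pi) := by
  have key : ∀ θ : ℝ → ℝ, ContinuousOn θ (Set.Icc 0 1) → (∀ t ∈ Set.Icc (0 : ℝ) 1,
      γ t = (‖γ t‖ : ℂ) * Complex.exp ((θ t : ℂ) * Complex.I)) →
      θ 1 - θ 0 = (L 1).im - (L 0).im := by
    intro θ hθ he
    have hθ' : Continuous fun t : unitInterval => θ t :=
      continuousOn_iff_continuous_domRestrict.1 hθ
    have hL' : Continuous fun t : unitInterval => L t :=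
      continuousOn_iff_continuous_domRestrict.1 hL
    have := log_diff_const (fun t : unitInterval => L t)
      (fun t : unitInterval => ((L t).re : ℂ) + (θ t : ℂ) * Complex.I)
      hL' ((Complex.continuous_ofReal.comp (Complex.continuous_re.comp hL')).add
        ((Complex.continuous_ofReal.comp hθ').mul continuous_const)) (by
        intro t
        rw [← h t t.2, Complex.exp_add, ← Complex.ofReal_exp, ← Complex.norm_exp, ← h t t.2]
        exact he t t.2) 0 1
    have := congrArg Complex.im this
    simp at this
    linarith
  have hex : ∃ θ : ℝ → ℝ, ContinuousOn θ (Set.Icc 0 1) ∧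
      ∀ t ∈ Set.Icc (0 : ℝ) 1, γ t = (‖γ t‖ : ℂ) * Complex.exp ((θ t : ℂ) * Complex.I) := by
    refine ⟨fun t => (L t).im, Complex.continuous_im.comp_continuousOn hL, ?_⟩
    intro t ht
    rw [h t ht, Complex.norm_exp, Complex.ofReal_exp, ← Complex.exp_add, Complex.re_add_im]
  unfold angVar
  rw [dif_pos hex, key _ hex.choose_spec.1 hex.choose_spec.2]

/-- The lift of `f` to the universal cover of the complement of a fixed point. -/
lemma exists_lift {f : ℂ ≃ₜ ℂ} (I : HIsotopy f) (z' : ℂ) (hz' : f z' = z') :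
    ∃ h : ℂ ≃ₜ ℂ, HasE h ∧ (∀ w, z' + Complex.exp (h w) = f (z' + Complex.exp w)) ∧
      (∀ w (k : ℤ), h (w + 2 * Real.pi * Complex.I * k) = h w + 2 * Real.pi * Complex.I * k) ∧
      ∀ w, Enlace I (z' + Complex.exp w) z' = ((h w).im - w.im) / (2 * Real.pi) := by
  obtain ⟨Ht, Kt, hH, hK, hHe, hH0, hKH, hHK⟩ := lift_isotopy I z'
  let h : ℂ ≃ₜ ℂ :=
    { toFun := fun w => Ht (1, w)
      invFun := fun w => Kt (1, w)
      left_inv := fun w => hKH 1 w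
      right_inv := fun w => hHK 1 w
      continuous_toFun := by fun_prop
      continuous_invFun := by fun_prop }
  have hh : ∀ w, h w = Ht (1, w) := fun w => rfl
  refine ⟨h, hasE_of_isotopy Ht Kt hH hH0 hKH h hh, ?_, ?_, ?_⟩
  · intro w
    rw [hh, hHe]
    simp [I.one, hz']
  · intro w k
    have hexp : ∀ u : ℂ, Complex.exp (u + 2 * Real.pi * Complex.I * k) = Complex.exp u := by
      intro u
      rw [Complex.exp_eq_exp_iff_exists_int]
      exact ⟨k, by ring⟩
    refine congrFun (log_unique
      (fun t : unitInterval => Ht (t, w + 2 * Real.pi * Complex.I * k))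
      (fun t : unitInterval => Ht (t, w) + 2 * Real.pi * Complex.I * k) (by fun_prop)
      (by fun_prop) ?_ 0 (by simp [hH0])) 1
    intro t
    rw [hexp, hHe, hHe, hexp]
  · intro w
    unfold Enlace
    rw [angVar_eq _ (fun t => Ht (Set.projIcc 0 1 zero_le_one t, w))
      (Continuous.continuousOn (by
        have : Continuous (Set.projIcc (0:ℝ) 1 zero_le_one) := continuous_projIcc
        exact hH.comp (this.prodMk continuous_const)))]
    · rw [hh]
      have h1 : Set.projIcc (0:ℝ) 1 zero_le_one 1 = 1 := Set.projIcc_right _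
      have h2 : Set.projIcc (0:ℝ) 1 zero_le_one 0 = 0 := Set.projIcc_left _
      simp only [h1, h2, hH0]
    · intro t ht
      rw [hHe, Set.projIcc_of_mem _ ht]

/-! ### The free disc and its lifts -/

lemma disc_log {U : Set ℂ} (φ : U ≃ₜ ℂ) (z' : ℂ) (hz' : z' ∉ U) :
    ∃ l : ℂ → ℂ, ContinuousOn l U ∧ ∀ u ∈ U, z' + Complex.exp (l u) = u := by
  obtain ⟨v, hv, hve⟩ := exists_log (fun x => (φ.symm x : ℂ) - z') (by fun_prop) (by
    intro x hx
    apply hz'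
    rw [← sub_eq_zero.1 hx]
    exact (φ.symm x).2)
  refine ⟨fun u => if hu : u ∈ U then v (φ ⟨u, hu⟩) else 0, ?_, ?_⟩
  · rw [continuousOn_iff_continuous_domRestrict]
    have : U.domRestrict (fun u => if hu : u ∈ U then v (φ ⟨u, hu⟩) else 0) =
        fun u => v (φ u) := by
      funext u
      exact dif_pos u.2
    rw [this]
    fun_prop
  · intro u hu
    simp only [dif_pos hu]
    rw [hve]
    simp

/-- The lifts of the disc. -/
def liftW (U : Set ℂ) (l : ℂ → ℂ) (j : ℤ) : Set ℂ :=
  (fun u => l u + 2 * Real.pi * Complex.I * j) '' U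

lemma exp_add_period (u : ℂ) (k : ℤ) :
    Complex.exp (u + 2 * Real.pi * Complex.I * k) = Complex.exp u := by
  rw [Complex.exp_eq_exp_iff_exists_int]
  exact ⟨k, by ring⟩

lemma mem_liftW {U : Set ℂ} {l : ℂ → ℂ} {z' : ℂ} (hl : ∀ u ∈ U, z' + Complex.exp (l u) = u)
    {j : ℤ} {w : ℂ} : w ∈ liftW U l j ↔ z' + Complex.exp w ∈ U ∧
      l (z' + Complex.exp w) + 2 * Real.pi * Complex.I * j = w := by
  constructor
  · rintro ⟨u, hu, rfl⟩
    simp only [exp_add_period, hl u hu]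
    exact ⟨hu, trivial⟩
  · rintro ⟨h1, h2⟩
    exact ⟨_, h1, h2⟩

lemma period_ne : (2 * Real.pi * Complex.I : ℂ) ≠ 0 := by
  simp [Real.pi_ne_zero]

lemma exists_period {U : Set ℂ} {l : ℂ → ℂ} {z' : ℂ}
    (hl : ∀ u ∈ U, z' + Complex.exp (l u) = u) {w : ℂ} (hw : z' + Complex.exp w ∈ U) :
    ∃ k : ℤ, w = l (z' + Complex.exp w) + 2 * Real.pi * Complex.I * k := by
  have := hl _ hw
  have := (Complex.exp_eq_exp_iff_exists_int.1 (add_left_cancel this)).imp fun k hk => hk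
  obtain ⟨k, hk⟩ := this
  refine ⟨-k, ?_⟩
  rw [hk]
  push_cast
  ring

lemma isOpen_liftW {U : Set ℂ} (hU : IsOpen U) {l : ℂ → ℂ} {z' : ℂ}
    (hc : ContinuousOn l U) (hl : ∀ u ∈ U, z' + Complex.exp (l u) = u) (j : ℤ) :
    IsOpen (liftW U l j) := by
  have hV : IsOpen {w : ℂ | z' + Complex.exp w ∈ U} :=
    hU.preimage (f := fun w => z' + Complex.exp w) (by fun_prop)
  have hcl : ContinuousOn (fun w => l (z' + Complex.exp w)) {w : ℂ | z' + Complex.exp w ∈ U} :=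
    hc.comp (by fun_prop) (fun w hw => hw)
  have hcc : ContinuousOn (fun w => ‖w - l (z' + Complex.exp w) - 2 * Real.pi * Complex.I * j‖)
      {w : ℂ | z' + Complex.exp w ∈ U} :=
    ((continuousOn_id.sub hcl).sub continuousOn_const).norm
  have := hcc.isOpen_inter_preimage hV (isOpen_Iio (a := (1 : ℝ)))
  convert this using 1
  ext w
  rw [mem_liftW hl]
  simp only [Set.mem_inter_iff, Set.mem_ofPred_eq, Set.mem_preimage, Set.mem_Iio]
  refine and_congr_right fun hw => ?_
  constructor
  · intro h
    have : w - l (z' + Complex.exp w) - 2 * Real.pi * Complex.I * j = 0 := by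
      linear_combination -h
    rw [this]; simp
  · intro h
    obtain ⟨k, hk⟩ := exists_period hl hw
    have e : w - l (z' + Complex.exp w) - 2 * Real.pi * Complex.I * j =
        2 * Real.pi * Complex.I * ((k - j : ℤ) : ℂ) := by
      push_cast
      linear_combination hk
    rw [e] at h
    have hkj : k = j := by
      by_contra hne
      have h1 : (1 : ℝ) ≤ |((k - j : ℤ) : ℝ)| := by
        exact_mod_cast Int.one_le_abs (sub_ne_zero.2 hne)
      rw [norm_mul, Complex.norm_intCast] at h
      have h2 : ‖(2 * Real.pi * Complex.I : ℂ)‖ = 2 * Real.pi := by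
        simp [abs_of_pos Real.pi_pos]
      rw [h2] at h
      nlinarith [Real.pi_gt_three]
    rw [← hkj]
    exact hk.symm

lemma exists_path {U : Set ℂ} (φ : U ≃ₜ ℂ) {a b : ℂ} (ha : a ∈ U) (hb : b ∈ U) :
    ∃ γ : ℝ → ℂ, IsPathIn U a b γ := by
  refine ⟨fun t => φ.symm ((1 - t) * φ ⟨a, ha⟩ + t * φ ⟨b, hb⟩), ?_, ?_, ?_, ?_⟩
  · exact Continuous.continuousOn (by fun_prop)
  · intro t _
    exact Subtype.coe_prop _
  · simp
  · simp

lemma lift_iterate {f h : ℂ ≃ₜ ℂ} {z' : ℂ}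
    (hf : ∀ w, z' + Complex.exp (h w) = f (z' + Complex.exp w)) (n : ℕ) (w : ℂ) :
    z' + Complex.exp (h^[n] w) = f^[n] (z' + Complex.exp w) := by
  induction n with
  | zero => rfl
  | succ n ih => rw [Function.iterate_succ_apply', Function.iterate_succ_apply', hf, ih]

lemma retTime_spec {f : ℂ ≃ₜ ℂ} {U : Set ℂ} (hU : IsOpen U) {z : ℂ}
    (hz : z ∈ RecPlus f ∩ U) : 1 ≤ retTime f U z ∧ f^[retTime f U z] z ∈ U ∧
      ∀ n, 0 < n → n < retTime f U z → f^[n] z ∉ U := by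
  have hne : {n : ℕ | 0 < n ∧ (⇑f)^[n] z ∈ U}.Nonempty := by
    obtain ⟨⟨n, hn, ht⟩, hzU⟩ := hz
    have := ht.eventually (hU.mem_nhds hzU)
    obtain ⟨k, hk1, hk⟩ := (this.and (eventually_ge_atTop 1)).exists
    exact ⟨n k, lt_of_lt_of_le hk (hn.id_le k), hk1⟩
  have := Nat.sInf_mem hne
  refine ⟨this.1, this.2, ?_⟩
  intro n h0 hn hU
  exact Nat.notMem_of_lt_sInf hn ⟨h0, hU⟩

lemma alphaU_spec {f h : ℂ ≃ₜ ℂ} (I : HIsotopy f) {U : Set ℂ} (hU : IsOpen U) (φ : U ≃ₜ ℂ)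
    {l : ℂ → ℂ} {z' : ℂ}
    (hc : ContinuousOn l U) (hl : ∀ u ∈ U, z' + Complex.exp (l u) = u)
    (hf : ∀ w, z' + Complex.exp (h w) = f (z' + Complex.exp w))
    (hEn : ∀ w, Enlace I (z' + Complex.exp w) z' = ((h w).im - w.im) / (2 * Real.pi))
    {z : ℂ} (hz : z ∈ RecPlus f ∩ U) :
    ∃ k : ℤ, alphaU I U z' z = k ∧
      h^[retTime f U z] (l z) = l (f^[retTime f U z] z) + 2 * Real.pi * Complex.I * k := by
  obtain ⟨h1, hret, -⟩ := retTime_spec hU hz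
  set τ := retTime f U z with hτ
  have hit : ∀ n, z' + Complex.exp (h^[n] (l z)) = f^[n] z := by
    intro n
    rw [lift_iterate hf, hl z hz.2]
  obtain ⟨k, hk⟩ := exists_period hl (w := h^[τ] (l z)) (by rw [hit]; exact hret)
  rw [hit] at hk
  refine ⟨k, ?_, hk⟩
  have hsum : (∑ i ∈ Finset.range τ, Enlace I ((⇑f)^[i] z) z') =
      ((h^[τ] (l z)).im - (l z).im) / (2 * Real.pi) := by
    rw [Finset.sum_congr rfl (g := fun i => (h^[i+1] (l z)).im / (2 * Real.pi) -
      (h^[i] (l z)).im / (2 * Real.pi))]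
    · rw [Finset.sum_range_sub (fun i => (h^[i] (l z)).im / (2 * Real.pi))]
      simp only [Function.iterate_zero, id]
      ring
    · intro i _
      rw [← hit i, hEn, Function.iterate_succ_apply']
      ring
  have hex := exists_path φ hret hz.2
  have hang : angVar (fun t => hex.choose t - z') =
      ((l z).im - (l (f^[τ] z)).im) / (2 * Real.pi) := by
    obtain ⟨p1, p2, p3, p4⟩ := hex.choose_spec
    rw [angVar_eq _ (fun t => l (hex.choose t)) (hc.comp p1 p2), p3, p4]
    intro t ht
    rw [eq_comm, eq_sub_iff_add_eq, add_comm]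
    exact hl _ (p2 t ht)
  unfold alphaU
  rw [← hτ, dif_pos hex, hsum, hang, hk]
  have : (2 * Real.pi * Complex.I * (k : ℂ)).im = 2 * Real.pi * k := by
    simp
  rw [Complex.add_im, this]
  field_simp
  ring

lemma main_sep {f : ℂ ≃ₜ ℂ} (I : HIsotopy f) (M : ℝ)
    (hM : ∀ z ∈ FixPts ⇑f, ∀ z' ∈ FixPts ⇑f, z ≠ z' → |Enlace I z z'| ≤ M)
    (z' : ℂ) (hz' : z' ∈ FixPts ⇑f)
    (U : Set ℂ) (hU : FreeDisc f U) (p : ℤ) (hp : M < |(p : ℝ)|) {z₁ z₂ : ℂ}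
    (hz₁ : z₁ ∈ RecPlus f ∩ U) (hz₂ : z₂ ∈ RecPlus f ∩ U)
    (h₁ : alphaU I U z' z₁ / (retTime f U z₁ : ℝ) < p)
    (h₂ : p < alphaU I U z' z₂ / (retTime f U z₂ : ℝ)) : False := by
  obtain ⟨hUo, ⟨φ⟩, hUd⟩ := hU
  have hfree : ∀ u ∈ U, f u ∉ U := by
    intro u hu hfu
    exact Set.disjoint_left.1 hUd ⟨u, hu, rfl⟩ hfu
  have hfz : f z' = z' := hz'
  have hz'U : z' ∉ U := by
    intro h
    exact hfree z' h (by rwa [hfz])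
  obtain ⟨l, hlc, hl⟩ := disc_log φ z' hz'U
  obtain ⟨h, hE, hf, hper, hEn⟩ := exists_lift I z' hfz
  let g : ℂ ≃ₜ ℂ := h.trans (Homeomorph.addRight (-(2 * Real.pi * Complex.I * p)))
  have hg : ∀ w, g w = h w - 2 * Real.pi * Complex.I * p := by
    intro w
    simp [g, sub_eq_add_neg]
  have hgE : HasE g := hE.trans (HasE.translate _)
  have hgexp : ∀ w, z' + Complex.exp (g w) = f (z' + Complex.exp w) := by
    intro w
    rw [← hf, hg]
    have := exp_add_period (h w) (-p)
    rw [← this]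
    push_cast
    congr 2
    ring
  have hgit : ∀ n : ℕ, ∀ w (j : ℤ), g^[n] (w + 2 * Real.pi * Complex.I * j) =
      h^[n] w + 2 * Real.pi * Complex.I * ((j - p * n : ℤ) : ℂ) := by
    intro n
    induction n with
    | zero => intro w j; simp
    | succ n ih =>
      intro w j
      rw [Function.iterate_succ_apply', Function.iterate_succ_apply', ih, hg, hper]
      push_cast
      ring
  have hfix : ∀ w, g w ≠ w := by
    intro w hw
    have hh : h w = w + 2 * Real.pi * Complex.I * p := by
      rw [hg] at hw
      linear_combination hw
    have hfw : f (z' + Complex.exp w) = z' + Complex.exp w := by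
      rw [← hgexp, hw]
    have := hM (z' + Complex.exp w) hfw z' hz' (by simp)
    rw [hEn, hh] at this
    have e : (2 * Real.pi * Complex.I * (p : ℂ)).im = 2 * Real.pi * p := by simp
    rw [Complex.add_im, e, add_sub_cancel_left, mul_div_cancel_left₀ _ (by positivity)] at this
    linarith
  have hUc : IsPreconnected U := by
    have : PreconnectedSpace U := φ.symm.surjective.denseRange.preconnectedSpace φ.symm.continuous
    exact isPreconnected_iff_preconnectedSpace.2 this
  have data : ∀ z ∈ RecPlus f ∩ U, ∃ k : ℤ, alphaU I U z' z = k ∧ 1 ≤ retTime f U z ∧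
      (∀ j : ℤ, l z + 2 * Real.pi * Complex.I * j ∈ liftW U l j) ∧
      (∀ j : ℤ, g^[retTime f U z] (l z + 2 * Real.pi * Complex.I * j) ∈
        liftW U l (j + (k - p * retTime f U z))) ∧
      (∀ j : ℤ, ∀ n, 0 < n → n < retTime f U z → ∀ i,
        g^[n] (l z + 2 * Real.pi * Complex.I * j) ∉ liftW U l i) := by
    intro z hz
    obtain ⟨k, hk, hk'⟩ := alphaU_spec I hUo φ hlc hl hf hEn hz
    obtain ⟨hτ, hret, hnot⟩ := retTime_spec hUo hz
    refine ⟨k, hk, hτ, fun j => ⟨z, hz.2, rfl⟩, ?_, ?_⟩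
    · intro j
      refine ⟨_, hret, ?_⟩
      simp only
      rw [hgit, hk']
      push_cast
      ring
    · intro j n h0 hn i hmem
      have := ((mem_liftW hl).1 hmem).1
      rw [lift_iterate hgexp, exp_add_period, hl z hz.2] at this
      exact hnot n h0 hn this
  obtain ⟨k₁, ha₁, hτ₁, hd₁, hr₁, hn₁⟩ := data z₁ hz₁
  obtain ⟨k₂, ha₂, hτ₂, hd₂, hr₂, hn₂⟩ := data z₂ hz₂
  refine no_pos_neg_return hgE hfix (W := liftW U l) (isOpen_liftW hUo hlc hl) ?_ ?_ ?_
    _ _ _ _ _ _ ?_ ?_ hd₁ hd₂ hτ₁ hτ₂ hr₁ hr₂ hn₁ hn₂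
  · intro j
    exact hUc.image _ (hlc.add continuousOn_const)
  · intro i j x hi hj
    have e1 := ((mem_liftW hl).1 hi).2
    have e2 := ((mem_liftW hl).1 hj).2
    have : (2 * Real.pi * Complex.I : ℂ) * i = 2 * Real.pi * Complex.I * j := by
      linear_combination e1 - e2
    exact_mod_cast mul_left_cancel₀ period_ne this
  · intro j u hu hgu
    have e1 := ((mem_liftW hl).1 hu).1
    have e2 := ((mem_liftW hl).1 hgu).1
    rw [hgexp] at e2
    exact hfree _ e1 e2
  · have : (0 : ℝ) < retTime f U z₁ := by exact_mod_cast hτ₁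
    rw [ha₁, div_lt_iff₀ this] at h₁
    have : k₁ < p * retTime f U z₁ := by exact_mod_cast h₁
    linarith
  · have : (0 : ℝ) < retTime f U z₂ := by exact_mod_cast hτ₂
    rw [ha₂, lt_div_iff₀ this] at h₂
    have : p * retTime f U z₂ < k₂ := by exact_mod_cast h₂
    linarith

lemma interval_of_sep (A : Set ℝ) (M : ℝ) (hM : 0 ≤ M)
    (h : ∀ a ∈ A, ∀ b ∈ A, ∀ p : ℤ, M < |(p : ℝ)| → a < p → p < b → False) :
    ∃ c, ∀ a ∈ A, a ∈ Set.Icc c (c + (2 * M + 4)) := by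
  have hd : ∀ a ∈ A, ∀ b ∈ A, b - a ≤ 2 * M + 4 := by
    intro a ha b hb
    by_contra! hlt
    by_cases hb2 : M + 2 < b
    · have e1 := Int.le_ceil b
      have e2 := Int.ceil_lt_add_one b
      refine h a ha b hb (⌈b⌉ - 1) ?_ ?_ ?_
      · push_cast
        rw [abs_of_nonneg (by linarith)]; linarith
      · push_cast
        by_contra! hle
        have e3 : a ≥ b - 1 := by linarith
        linarith
      · push_cast; linarith
    · have e1 := Int.floor_le a
      have e2 := Int.lt_floor_add_one a
      refine h a ha b hb (⌊a⌋ + 1) ?_ ?_ ?_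
      · push_cast
        rw [abs_of_nonpos (by linarith)]; linarith
      · push_cast; linarith
      · push_cast; linarith
  rcases A.eq_empty_or_nonempty with rfl | ⟨a₀, ha₀⟩
  · exact ⟨0, by simp⟩
  have hbd : BddBelow A := ⟨a₀ - (2 * M + 4), fun a ha => by linarith [hd a ha a₀ ha₀]⟩
  refine ⟨sInf A, fun a ha => ⟨csInf_le hbd ha, ?_⟩⟩
  have : a - (2 * M + 4) ≤ sInf A := le_csInf ⟨a₀, ha₀⟩ fun b hb => by linarith [hd b hb a ha]
  linarith

theorem stmt13_alpha_over_tau_in_interval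
    (f : ℂ ≃ₜ ℂ) (I : HIsotopy f) (hP1 : P1 I) (hP2 : P2 I)
    (hnc : ¬ IsCompact (FixPts ⇑f)) (hA : Adapted I)
    (M : ℝ)
    (hM : ∀ z ∈ FixPts ⇑f, ∀ z' ∈ FixPts ⇑f, z ≠ z' → |Enlace I z z'| ≤ M)
    (z' : ℂ) (hz' : z' ∈ FixPts ⇑f)
    (U : Set ℂ) (hU : FreeDisc f U) :
    ∃ c : ℝ, ∀ z ∈ RecPlus f ∩ U,
      alphaU I U z' z / (retTime f U z : ℝ) ∈ Set.Icc c (c + (2 * M + 4)) := by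
  have hM0 : 0 ≤ M := by
    have : ∃ z ∈ FixPts ⇑f, z ≠ z' := by
      by_contra! hall
      apply hnc
      have : FixPts ⇑f = {z'} := by
        ext x
        exact ⟨hall x, fun hx => by rw [Set.mem_singleton_iff.1 hx]; exact hz'⟩
      rw [this]
      exact isCompact_singleton
    obtain ⟨z, hz, hne⟩ := this
    exact (abs_nonneg _).trans (hM z hz z' hz' hne)
  obtain ⟨c, hc⟩ := interval_of_sep
    ((fun z => alphaU I U z' z / (retTime f U z : ℝ)) '' (RecPlus f ∩ U)) M hM0 (by
      rintro _ ⟨z₁, hz₁, rfl⟩ _ ⟨z₂, hz₂, rfl⟩ p hp h₁ h₂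
      exact main_sep I M hM z' hz' U hU p hp hz₁ hz₂ h₁ h₂)
  exact ⟨c, fun z hz => hc _ ⟨z, hz, rfl⟩⟩

end
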